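/- arXiv:2401.00244 — 4 statements merged into one kernel-verified Lean document; each statement's English description precedes it below -/
import Mathlib

section
/- Let r ≥ 2 be an integer and let a > b > 0 be coprime integers. Let a₀, a₁, …, a_n be the positive integers defined inductively by a₀ = a, a₁ = b, and a_{j+1} = a_{j−1} − q_j a_j for some positive integers q₁, …, q_{n−1}, terminating at a_n = 1. Let s₀, s₁, …, s_n be defined inductively by s₀ = 0, s₁ = 1, and s_{j+1} = s_j q_j + s_{j−1}. Then c(b, a; b/r, a/r) = Σ_{j=1}^{n} (−1)^j [ c(a_{j−1}/r) · c(a_j/r) − (a_{j−1}/a_j) · (δ(a_j, r)/r) · c₂(a_{j−1}/r) − (a_j/a_{j−1}) · (δ(a_{j−1}, r)/r) · c₂(a_j/r) ] + (−1)^{n−1} (s_n/a) · c₂(1/r) + E, where E = −1 if n is odd and E = 0 if n is even. -/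
/-!
The identity behind everything is the addition formula for the cotangent: up to corrections
supported on `ℤ`, `c(u) c(v) = -1 + c(u - v) (c(v) - c(u))`. Thanks to the values `c = 0` and
`c₂ = 1/3` at integers, the corrected formula holds for all real `u`, `v`. Summing it over
`u = (k + y) / a`, `v = (l + x) / b` and using the distribution relations
`∑ c((k + y) / a) = a c(y)` and `∑ c₂((k + y) / a) = a² c₂(y)` gives Dieter's reciprocity law
between `c(b, a; x, y)` and `c(a, b; y, x)`. On the line `(x, y) = (b z, a z)` the law is stable
under the division step `a ↦ a - q b`, so along the Euclidean algorithm consecutive sums have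
known pairwise sums, and an alternating telescoping finishes the proof. The coefficient of
`c₂(z)` is the alternating sum of `1 / (a_{j-1} a_j)`, which telescopes to a convergent.
-/

open Real
open scoped Classical

/-- `c(z) = cot(πz)` if `z ∉ ℤ`, and `0` if `z ∈ ℤ`. -/
noncomputable def cFn (z : ℝ) : ℝ :=
  if ∃ m : ℤ, z = m then 0 else Real.cot (Real.pi * z)

/-- `c₂(z) = csc²(πz)` if `z ∉ ℤ`, and `1/3` if `z ∈ ℤ`. -/
noncomputable def c2Fn (z : ℝ) : ℝ :=
  if ∃ m : ℤ, z = m then 1 / 3 else 1 / (Real.sin (Real.pi * z)) ^ 2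

/-- `δ(z, n) = n` if `z` is an integer divisible by `n`, and `0` otherwise. -/
noncomputable def deltaFn (z : ℝ) (n : ℤ) : ℝ :=
  if ∃ m : ℤ, z = m ∧ n ∣ m then (n : ℝ) else 0

/-- The Dedekind–Dieter cotangent sum
`c(b,a;x,y) = (1/a) ∑_{k=0}^{a-1} c((b/a)(k+y) - x) c((k+y)/a)`. -/
noncomputable def dedekindDieter (b a : ℤ) (x y : ℝ) : ℝ :=
  (1 / (a : ℝ)) * ∑ k ∈ Finset.range a.toNat,
    cFn ((b : ℝ) / (a : ℝ) * ((k : ℝ) + y) - x) * cFn (((k : ℝ) + y) / (a : ℝ))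

section Integers

variable {z : ℝ}

lemma cFn_intCast (m : ℤ) : cFn m = 0 := if_pos ⟨m, rfl⟩

lemma c2Fn_intCast (m : ℤ) : c2Fn m = 1 / 3 := if_pos ⟨m, rfl⟩

lemma deltaFn_intCast (m n : ℤ) : deltaFn m n = if n ∣ m then (n : ℝ) else 0 := by
  simp [deltaFn]

lemma cFn_of_not_int (hz : ¬∃ m : ℤ, z = m) : cFn z = cos (π * z) / sin (π * z) := by
  rw [cFn, if_neg hz, cot_eq_cos_div_sin]

lemma deltaFn_of_not_int (hz : ¬∃ m : ℤ, z = m) (n : ℤ) : deltaFn z n = 0 :=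
  if_neg fun ⟨m, hm, _⟩ ↦ hz ⟨m, hm⟩

lemma sin_pi_mul_ne_zero_of_not_int (hz : ¬∃ m : ℤ, z = m) : sin (π * z) ≠ 0 := by
  refine sin_ne_zero_iff.2 fun m hm ↦ hz ⟨m, ?_⟩
  rw [mul_comm] at hm
  exact (mul_left_cancel₀ pi_ne_zero hm).symm

lemma deltaFn_div_one {r : ℤ} (hr : r ≠ 0) (z : ℝ) : deltaFn (z / r) 1 = deltaFn z r / r := by
  have hr' : (r : ℝ) ≠ 0 := by exact_mod_cast hr
  have int_iff : (∃ m : ℤ, z / r = m ∧ 1 ∣ m) ↔ ∃ m : ℤ, z = m ∧ r ∣ m := by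
    constructor
    · rintro ⟨m, hm, -⟩
      exact ⟨r * m, by rw [Int.cast_mul, ← hm, mul_div_cancel₀ _ hr'], dvd_mul_right r m⟩
    · rintro ⟨_, rfl, m, rfl⟩
      exact ⟨m, by rw [Int.cast_mul, mul_div_cancel_left₀ _ hr'], one_dvd m⟩
  simp only [deltaFn, int_iff, ite_div, Int.cast_one, div_self hr', zero_div]

lemma deltaFn_intCast_div_one {r : ℤ} (hr : r ≠ 0) (m : ℤ) :
    deltaFn ((m : ℝ) / r) 1 = if r ∣ m then 1 else 0 := by
  have hr' : (r : ℝ) ≠ 0 := by exact_mod_cast hr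
  rw [deltaFn_div_one hr, deltaFn_intCast, ite_div, div_self hr', zero_div]

end Integers

section Symmetries

lemma exists_add_one_eq_intCast_iff (z : ℝ) : (∃ m : ℤ, z + 1 = m) ↔ ∃ m : ℤ, z = m :=
  ⟨fun ⟨m, hm⟩ ↦ ⟨m - 1, by push_cast; linarith⟩, fun ⟨m, hm⟩ ↦ ⟨m + 1, by push_cast; linarith⟩⟩

lemma exists_neg_eq_intCast_iff (z : ℝ) : (∃ m : ℤ, -z = m) ↔ ∃ m : ℤ, z = m :=
  ⟨fun ⟨m, hm⟩ ↦ ⟨-m, by push_cast; linarith⟩, fun ⟨m, hm⟩ ↦ ⟨-m, by push_cast; linarith⟩⟩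

lemma cFn_periodic : Function.Periodic cFn 1 := fun z ↦ by
  simp only [cFn, exists_add_one_eq_intCast_iff, cot_eq_cos_div_sin, mul_add, mul_one,
    cos_add_pi, sin_add_pi, neg_div_neg_eq]

lemma deltaFn_one_periodic : Function.Periodic (deltaFn · 1) 1 := fun z ↦ by
  simp only [deltaFn, one_dvd, and_true, exists_add_one_eq_intCast_iff]

lemma cFn_add_intCast (z : ℝ) (m : ℤ) : cFn (z + m) = cFn z := by
  simpa using cFn_periodic.int_mul m z

lemma deltaFn_add_intCast (z : ℝ) (m : ℤ) : deltaFn (z + m) 1 = deltaFn z 1 := by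
  simpa using deltaFn_one_periodic.int_mul m z

lemma cFn_neg (z : ℝ) : cFn (-z) = -cFn z := by
  simp only [cFn, exists_neg_eq_intCast_iff, cot_eq_cos_div_sin, mul_neg, cos_neg, sin_neg,
    div_neg]
  split_ifs <;> simp

lemma deltaFn_neg (z : ℝ) : deltaFn (-z) 1 = deltaFn z 1 := by
  simp only [deltaFn, one_dvd, and_true, exists_neg_eq_intCast_iff]

end Symmetries

section AdditionFormula

lemma one_add_cFn_sq (z : ℝ) : 1 + cFn z ^ 2 = (1 + 2 * deltaFn z 1) * c2Fn z := by
  by_cases hz : ∃ m : ℤ, z = m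
  · obtain ⟨m, rfl⟩ := hz
    norm_num [cFn_intCast, c2Fn_intCast, deltaFn_intCast]
  · have hsin := sin_pi_mul_ne_zero_of_not_int hz
    rw [cFn_of_not_int hz, deltaFn_of_not_int hz, c2Fn, if_neg hz]
    field_simp
    linear_combination sin_sq_add_cos_sq (π * z)

lemma deltaFn_mul_c2Fn (z : ℝ) : deltaFn z 1 * c2Fn z = deltaFn z 1 / 3 := by
  by_cases hz : ∃ m : ℤ, z = m
  · obtain ⟨m, rfl⟩ := hz
    rw [c2Fn_intCast, mul_one_div]
  · simp [deltaFn_of_not_int hz]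

lemma cFn_mul_cFn_of_not_int {u v : ℝ} (hu : ¬∃ m : ℤ, u = m) (hv : ¬∃ m : ℤ, v = m)
    (huv : ¬∃ m : ℤ, u - v = m) : cFn u * cFn v = -1 + cFn (u - v) * (cFn v - cFn u) := by
  have hsu := sin_pi_mul_ne_zero_of_not_int hu
  have hsv := sin_pi_mul_ne_zero_of_not_int hv
  have hsuv := sin_pi_mul_ne_zero_of_not_int huv
  rw [cFn_of_not_int hu, cFn_of_not_int hv, cFn_of_not_int huv]
  rw [mul_sub π, sin_sub] at hsuv
  rw [mul_sub π, sin_sub, cos_sub]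
  field_simp
  ring

theorem cFn_mul_cFn (u v : ℝ) :
    cFn u * cFn v = -1 + cFn (u - v) * (cFn v - cFn u) + deltaFn u 1 * c2Fn v
      + deltaFn v 1 * c2Fn u + deltaFn (u - v) 1 * c2Fn u := by
  by_cases hu : ∃ m : ℤ, u = m
  · obtain ⟨m, rfl⟩ := hu
    have hc : cFn (m - v) = -cFn v := by rw [sub_eq_neg_add, cFn_add_intCast, cFn_neg]
    have hδ : deltaFn (m - v) 1 = deltaFn v 1 := by
      rw [sub_eq_neg_add, deltaFn_add_intCast, deltaFn_neg]
    simp only [hc, hδ, cFn_intCast, c2Fn_intCast, deltaFn_intCast, one_dvd, if_true, Int.cast_one]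
    linear_combination one_add_cFn_sq v + 2 * deltaFn_mul_c2Fn v
  by_cases hv : ∃ m : ℤ, v = m
  · obtain ⟨m, rfl⟩ := hv
    have hc : cFn (u - m) = cFn u := by simpa using (cFn_add_intCast (u - m) m).symm
    simp only [hc, deltaFn_of_not_int hu, cFn_intCast, deltaFn_intCast, one_dvd, if_true,
      Int.cast_one]
    have hδ : deltaFn (u - m) 1 = 0 := by
      simpa [deltaFn_of_not_int hu] using (deltaFn_add_intCast (u - m) m).symm
    rw [hδ]
    linear_combination one_add_cFn_sq u + 2 * c2Fn u * deltaFn_of_not_int hu 1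
  by_cases huv : ∃ m : ℤ, u - v = m
  · obtain ⟨m, hm⟩ := huv
    obtain rfl : u = v + m := by linarith
    simp only [hm, cFn_add_intCast, deltaFn_of_not_int hu, deltaFn_of_not_int hv, cFn_intCast,
      deltaFn_intCast, one_dvd, if_true, Int.cast_one]
    have := one_add_cFn_sq (v + m)
    rw [cFn_add_intCast, deltaFn_of_not_int hu] at this
    linear_combination this
  · simp only [cFn_mul_cFn_of_not_int hu hv huv, deltaFn_of_not_int hu, deltaFn_of_not_int hv,
      deltaFn_of_not_int huv, zero_mul, add_zero]

end AdditionFormula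

section RootsOfUnity

variable {K : Type*} [Field K] {n : ℕ} {ζ w : K}

lemma sum_pow_pow_of_isPrimitiveRoot (hζ : IsPrimitiveRoot ζ n) (m : ℕ) :
    ∑ l ∈ Finset.range n, (ζ ^ m) ^ l = if n ∣ m then (n : K) else 0 := by
  split_ifs with hm
  · simp [(hζ.pow_eq_one_iff_dvd m).2 hm]
  · have hne : ζ ^ m ≠ 1 := mt (hζ.pow_eq_one_iff_dvd m).1 hm
    rw [geom_sum_eq hne, ← pow_mul, mul_comm, pow_mul, hζ.pow_eq_one, one_pow, sub_self, zero_div]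

theorem sum_inv_one_sub_mul_pow_of_isPrimitiveRoot (hζ : IsPrimitiveRoot ζ n) (hw : w ^ n ≠ 1) :
    ∑ l ∈ Finset.range n, (1 - w * ζ ^ l)⁻¹ = n * (1 - w ^ n)⁻¹ := by
  have pow_eq (l : ℕ) : (w * ζ ^ l) ^ n = w ^ n := by
    rw [mul_pow, pow_right_comm, hζ.pow_eq_one, one_pow, mul_one]
  have expand (l : ℕ) : (1 - w * ζ ^ l)⁻¹
      = (∑ m ∈ Finset.range n, w ^ m * (ζ ^ m) ^ l) * (1 - w ^ n)⁻¹ := by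
    have hl : w * ζ ^ l ≠ 1 := fun h ↦ hw (by rw [← pow_eq l, h, one_pow])
    have h1 : 1 - w ^ n ≠ 0 := sub_ne_zero.2 hw.symm
    have h2 : 1 - w * ζ ^ l ≠ 0 := sub_ne_zero.2 hl.symm
    have geom := geom_sum_mul_neg (w * ζ ^ l) n
    simp only [pow_eq, mul_pow, pow_right_comm ζ l] at geom
    field_simp
    linear_combination -geom
  have hn : n ≠ 0 := by rintro rfl; exact hw (pow_zero w)
  simp only [expand, ← Finset.sum_mul]
  rw [Finset.sum_comm]
  simp only [← Finset.mul_sum, sum_pow_pow_of_isPrimitiveRoot hζ]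
  rw [Finset.sum_eq_single_of_mem 0 (by simpa [Nat.pos_iff_ne_zero] using hn)]
  · simp
  · intro m hm hm0
    have hlt := Finset.mem_range.1 hm
    rw [if_neg (Nat.not_dvd_of_pos_of_lt (Nat.pos_of_ne_zero hm0) hlt), mul_zero]

end RootsOfUnity

section Distribution

lemma sum_intCast_add_div_of_periodic {M : Type*} [AddCancelCommMonoid M] {f : ℝ → M}
    (hf : Function.Periodic f 1) (n : ℕ) (m : ℤ) :
    ∑ k ∈ Finset.range n, f ((k + m) / n) = ∑ k ∈ Finset.range n, f (k / n) := by
  rcases eq_or_ne n 0 with rfl | hn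
  · simp
  have hper : Function.Periodic (fun y ↦ ∑ k ∈ Finset.range n, f ((k + y) / n)) 1 := by
    intro y
    have wrap : f ((n + y) / n) = f (((0 : ℕ) + y) / n) := by
      rw [add_div, div_self (by exact_mod_cast hn), add_comm, hf, Nat.cast_zero, zero_add]
    have shift (k : ℕ) : f ((k + (y + 1)) / n) = f (((k + 1 : ℕ) + y) / n) := by
      congr 2; push_cast; ring
    simp only [shift]
    apply add_right_cancel (b := f (((0 : ℕ) + y) / n))
    rw [← Finset.sum_range_succ' (fun k ↦ f ((k + y) / n)), Finset.sum_range_succ, wrap]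
  simpa using hper.int_mul m 0

lemma not_int_natCast_add_div {n : ℕ} (hn : n ≠ 0) {y : ℝ} (hy : ¬∃ m : ℤ, y = m) (k : ℕ) :
    ¬∃ m : ℤ, (k + y) / n = m := by
  rintro ⟨m, hm⟩
  rw [div_eq_iff (by exact_mod_cast hn)] at hm
  exact hy ⟨m * n - k, by push_cast; linarith⟩

lemma exp_two_pi_I_mul_ne_one {z : ℝ} (hz : ¬∃ m : ℤ, z = m) :
    Complex.exp (2 * π * Complex.I * z) ≠ 1 := by
  rw [Ne, Complex.exp_eq_one_iff]
  rintro ⟨m, hm⟩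
  rw [mul_comm (m : ℂ)] at hm
  exact hz ⟨m, by exact_mod_cast mul_left_cancel₀ Complex.two_pi_I_ne_zero hm⟩

lemma ofReal_cFn_of_not_int {z : ℝ} (hz : ¬∃ m : ℤ, z = m) :
    (cFn z : ℂ) = Complex.I * (1 - 2 * (1 - Complex.exp (2 * π * Complex.I * z))⁻¹) := by
  have hne : 1 - Complex.exp (2 * π * Complex.I * z) ≠ 0 :=
    sub_ne_zero.2 (exp_two_pi_I_mul_ne_one hz).symm
  rw [cFn, if_neg hz, Complex.ofReal_cot, Complex.ofReal_mul, Complex.cot_pi_eq_exp_ratio]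
  have hI := Complex.I_ne_zero
  field_simp
  rw [Complex.I_sq]
  ring

lemma sum_cFn_div (n : ℕ) : ∑ k ∈ Finset.range n, cFn (k / n) = 0 := by
  have reflect : ∑ k ∈ Finset.range n, cFn (k / n)
      = -∑ k ∈ Finset.range n, cFn ((k + (1 : ℤ)) / n) := by
    rw [← Finset.sum_range_reflect, ← Finset.sum_neg_distrib]
    refine Finset.sum_congr rfl fun k hk ↦ ?_
    have hk := Finset.mem_range.1 hk
    have hn : (n : ℝ) ≠ 0 := by exact_mod_cast (by lia : n ≠ 0)
    rw [← cFn_neg, ← cFn_periodic (-_), Nat.cast_sub (by lia), Nat.cast_sub (by lia)]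
    congr 1
    field_simp
    push_cast
    ring
  rw [sum_intCast_add_div_of_periodic cFn_periodic] at reflect
  linarith

theorem sum_cFn_add_div (n : ℕ) (y : ℝ) :
    ∑ k ∈ Finset.range n, cFn ((k + y) / n) = n * cFn y := by
  rcases eq_or_ne n 0 with rfl | hn
  · simp
  by_cases hy : ∃ m : ℤ, y = m
  · obtain ⟨m, rfl⟩ := hy
    rw [sum_intCast_add_div_of_periodic cFn_periodic, sum_cFn_div, cFn_intCast, mul_zero]
  have hn' : (n : ℂ) ≠ 0 := by exact_mod_cast hn
  set w := Complex.exp (2 * π * Complex.I * (y / n)) with hw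
  set ζ := Complex.exp (2 * π * Complex.I / n) with hζ
  have exp_eq (k : ℕ) : Complex.exp (2 * π * Complex.I * ((k + y) / n : ℝ)) = w * ζ ^ k := by
    rw [hw, hζ, ← Complex.exp_nat_mul, ← Complex.exp_add]
    congr 1
    push_cast
    ring
  have pow_eq : w ^ n = Complex.exp (2 * π * Complex.I * y) := by
    rw [hw, ← Complex.exp_nat_mul]
    congr 1
    field_simp
  have term_eq (k : ℕ) : (cFn ((k + y) / n) : ℂ) = Complex.I * (1 - 2 * (1 - w * ζ ^ k)⁻¹) := by
    rw [ofReal_cFn_of_not_int (not_int_natCast_add_div hn hy k), exp_eq]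
  have root_sum : ∑ k ∈ Finset.range n, (1 - w * ζ ^ k)⁻¹ = n * (1 - w ^ n)⁻¹ :=
    sum_inv_one_sub_mul_pow_of_isPrimitiveRoot (Complex.isPrimitiveRoot_exp n hn)
      (pow_eq ▸ exp_two_pi_I_mul_ne_one hy)
  apply Complex.ofReal_injective
  push_cast
  simp only [term_eq, ofReal_cFn_of_not_int hy, ← Finset.mul_sum, Finset.sum_sub_distrib, root_sum,
    pow_eq, Finset.sum_const, Finset.card_range, nsmul_eq_mul]
  ring

theorem sum_deltaFn_add_div {n : ℕ} (hn : n ≠ 0) (y : ℝ) :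
    ∑ k ∈ Finset.range n, deltaFn ((k + y) / n) 1 = deltaFn y 1 := by
  by_cases hy : ∃ m : ℤ, y = m
  · obtain ⟨m, rfl⟩ := hy
    rw [sum_intCast_add_div_of_periodic deltaFn_one_periodic]
    have term_eq (k : ℕ) : deltaFn (k / n) 1 = if n ∣ k then 1 else 0 := by
      simpa [Int.natCast_dvd_natCast] using
        deltaFn_intCast_div_one (Int.natCast_ne_zero.2 hn) (k : ℤ)
    simp only [term_eq]
    rw [Finset.sum_eq_single_of_mem 0 (by simpa [Nat.pos_iff_ne_zero] using hn)]
    · simp [deltaFn_intCast]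
    · intro k hk hk0
      exact if_neg (Nat.not_dvd_of_pos_of_lt (Nat.pos_of_ne_zero hk0) (Finset.mem_range.1 hk))
  · rw [deltaFn_of_not_int hy]
    exact Finset.sum_eq_zero fun k _ ↦ deltaFn_of_not_int (not_int_natCast_add_div hn hy k) 1

lemma sum_cFn_add_div_sub {n : ℕ} (hn : n ≠ 0) (y v : ℝ) :
    ∑ k ∈ Finset.range n, cFn ((k + y) / n - v) = n * cFn (y - n * v) := by
  rw [← sum_cFn_add_div]
  congr! 2 with k
  field_simp
  ring

lemma sum_cFn_sub_add_div {n : ℕ} (hn : n ≠ 0) (u x : ℝ) :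
    ∑ l ∈ Finset.range n, cFn (u - (l + x) / n) = n * cFn (n * u - x) := by
  simp only [← neg_sub _ u, ← neg_sub x, cFn_neg, Finset.sum_neg_distrib,
    sum_cFn_add_div_sub hn, mul_neg]

lemma sum_deltaFn_sub_add_div {n : ℕ} (hn : n ≠ 0) (u x : ℝ) :
    ∑ l ∈ Finset.range n, deltaFn (u - (l + x) / n) 1 = deltaFn (n * u - x) 1 := by
  simp only [← neg_sub _ u, ← neg_sub x, deltaFn_neg]
  rw [← sum_deltaFn_add_div hn]
  congr! 2 with l
  field_simp
  ring

end Distribution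

section Reciprocity

lemma natCast_mul_dedekindDieter (b : ℤ) (a : ℕ) (x y : ℝ) :
    a * dedekindDieter b a x y
      = ∑ k ∈ Finset.range a, cFn (b * ((k + y) / a) - x) * cFn ((k + y) / a) := by
  rcases eq_or_ne a 0 with rfl | ha
  · simp
  have ha' : (a : ℝ) ≠ 0 := by exact_mod_cast ha
  simp only [dedekindDieter, Int.cast_natCast, Int.toNat_natCast, div_mul_eq_mul_div, mul_div_assoc]
  field_simp

-- Both sides arise from `cFn_mul_cFn` summed over all `u = (k + y) / a` and `v = (l + x) / b`.
lemma mul_cFn_mul_cFn_eq_dedekindDieter {a b : ℕ} (ha : a ≠ 0) (hb : b ≠ 0) (x y : ℝ) :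
    a * b * (cFn y * cFn x) =
      -(a * b) * (1 + dedekindDieter b a x y + dedekindDieter a b y x)
        + deltaFn y 1 * ∑ l ∈ Finset.range b, c2Fn ((l + x) / b)
        + deltaFn x 1 * ∑ k ∈ Finset.range a, c2Fn ((k + y) / a)
        + ∑ k ∈ Finset.range a,
            deltaFn (b * ((k + y) / a) - x) 1 * c2Fn ((k + y) / a) := by
  set u : ℕ → ℝ := fun k ↦ (k + y) / a
  set v : ℕ → ℝ := fun l ↦ (l + x) / b with hv
  have sum_v : ∑ k ∈ Finset.range a, ∑ l ∈ Finset.range b, cFn (u k - v l) * cFn (v l)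
      = -(a * (b * dedekindDieter a b y x)) := by
    rw [Finset.sum_comm, natCast_mul_dedekindDieter, Finset.mul_sum, ← Finset.sum_neg_distrib]
    refine Finset.sum_congr rfl fun l _ ↦ ?_
    rw [← Finset.sum_mul, sum_cFn_add_div_sub ha, ← neg_sub, cFn_neg, Int.cast_natCast]
    ring
  have sum_u : ∑ k ∈ Finset.range a, ∑ l ∈ Finset.range b, cFn (u k - v l) * cFn (u k)
      = b * (a * dedekindDieter b a x y) := by
    rw [natCast_mul_dedekindDieter, Finset.mul_sum]
    refine Finset.sum_congr rfl fun k _ ↦ ?_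
    rw [← Finset.sum_mul, sum_cFn_sub_add_div hb, Int.cast_natCast, mul_assoc]
  have sum_δ : ∑ k ∈ Finset.range a, ∑ l ∈ Finset.range b, deltaFn (u k - v l) 1 * c2Fn (u k)
      = ∑ k ∈ Finset.range a, deltaFn (b * u k - x) 1 * c2Fn (u k) := by
    simp only [← Finset.sum_mul, hv, sum_deltaFn_sub_add_div hb]
  calc a * b * (cFn y * cFn x)
      = ∑ k ∈ Finset.range a, ∑ l ∈ Finset.range b, cFn (u k) * cFn (v l) := by
        rw [← Finset.sum_mul_sum, sum_cFn_add_div, sum_cFn_add_div]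
        ring
    _ = _ := by
        simp only [cFn_mul_cFn (u _), mul_sub, Finset.sum_add_distrib, Finset.sum_sub_distrib,
          sum_u, sum_v, sum_δ]
        rw [← Finset.sum_mul_sum, Finset.sum_comm (s := Finset.range a) (t := Finset.range b)
          (f := fun k l ↦ deltaFn (v l) 1 * c2Fn (u k)), ← Finset.sum_mul_sum,
          sum_deltaFn_add_div ha, sum_deltaFn_add_div hb]
        simp only [Finset.sum_const, Finset.card_range, nsmul_eq_mul]
        ring

-- The case `b = a`, `y = x` of `mul_cFn_mul_cFn_eq_dedekindDieter`, where both Dedekind sums vanish.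
theorem sum_c2Fn_add_div (n : ℕ) (x : ℝ) :
    ∑ k ∈ Finset.range n, c2Fn ((k + x) / n) = n ^ 2 * c2Fn x := by
  rcases eq_or_ne n 0 with rfl | hn
  · simp
  have hn' : (n : ℝ) ≠ 0 := by exact_mod_cast hn
  have sub_eq (k : ℕ) : n * ((k + x) / n) - x = (k : ℤ) := by
    push_cast
    field_simp
    ring
  have dd_eq_zero : dedekindDieter n n x x = 0 := by
    refine (mul_eq_zero.1 ?_).resolve_left hn'
    rw [natCast_mul_dedekindDieter]
    refine Finset.sum_eq_zero fun k _ ↦ ?_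
    rw [Int.cast_natCast, sub_eq, cFn_intCast, zero_mul]
  have key := mul_cFn_mul_cFn_eq_dedekindDieter hn hn x x
  simp only [dd_eq_zero, sub_eq, deltaFn_intCast, one_dvd, if_true, Int.cast_one, one_mul] at key
  have hδ : 1 + 2 * deltaFn x 1 ≠ 0 := by
    unfold deltaFn
    split_ifs <;> norm_num
  apply mul_left_cancel₀ hδ
  linear_combination n ^ 2 * one_add_cFn_sq x - key

/-- The boundary term `c(y) c(x) - (a/b) δ(x) c₂(y) - (b/a) δ(y) c₂(x)` of the reciprocity law for
`c(b, a; x, y)`. Here `δ(z) = δ(z, 1)` is the indicator function of `ℤ`. -/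
noncomputable def reciprocityTerm (b a : ℤ) (x y : ℝ) : ℝ :=
  cFn y * cFn x - (a : ℝ) / b * deltaFn x 1 * c2Fn y - (b : ℝ) / a * deltaFn y 1 * c2Fn x

theorem dedekindDieter_add_dedekindDieter {a b : ℤ} (ha : 0 < a) (hb : 0 < b) (x y : ℝ) :
    dedekindDieter b a x y + dedekindDieter a b y x = -1 - reciprocityTerm b a x y
      + (∑ k ∈ Finset.range a.toNat,
          deltaFn (b * ((k + y) / a) - x) 1 * c2Fn ((k + y) / a)) / (a * b) := by
  lift a to ℕ using ha.le
  lift b to ℕ using hb.le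
  have ha' : (a : ℝ) ≠ 0 := by exact_mod_cast ha.ne'
  have hb' : (b : ℝ) ≠ 0 := by exact_mod_cast hb.ne'
  have key := mul_cFn_mul_cFn_eq_dedekindDieter (by lia : a ≠ 0) (by lia : b ≠ 0) x y
  rw [sum_c2Fn_add_div, sum_c2Fn_add_div] at key
  simp only [reciprocityTerm, Int.cast_natCast, Int.toNat_natCast]
  generalize (∑ k ∈ Finset.range a, _ : ℝ) = S at key ⊢
  field_simp
  linear_combination key

theorem dedekindDieter_add_dedekindDieter_of_isCoprime {a b : ℤ} (ha : 0 < a) (hb : 0 < b)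
    (hab : IsCoprime a b) (z : ℝ) :
    dedekindDieter b a (b * z) (a * z) + dedekindDieter a b (a * z) (b * z)
      = -1 - reciprocityTerm b a (b * z) (a * z) + c2Fn z / (a * b) := by
  have ha' : (a : ℝ) ≠ 0 := by exact_mod_cast ha.ne'
  have term_eq (k : ℕ) : deltaFn (b * ((k + a * z) / a) - b * z) 1
      = if a ∣ k then 1 else 0 := by
    have harg : b * ((k + a * z) / a) - b * z = ((b * k : ℤ) : ℝ) / a := by
      push_cast
      field_simp
      ring
    rw [harg, deltaFn_intCast_div_one ha.ne']
    exact if_congr ⟨hab.dvd_of_dvd_mul_left, (·.mul_left b)⟩ rfl rfl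
  rw [dedekindDieter_add_dedekindDieter ha hb, Finset.sum_eq_single_of_mem 0 (by simpa using ha)]
  · rw [term_eq, if_pos (by simp)]
    simp [mul_div_cancel_left₀ _ ha']
  · intro k hk hk0
    have hk := Finset.mem_range.1 hk
    rw [term_eq, if_neg fun h ↦ (Int.le_of_dvd (by lia) h).not_gt (by lia), zero_mul]

lemma dedekindDieter_sub_mul_self {a : ℤ} (ha : a ≠ 0) (b q : ℤ) (x y : ℝ) :
    dedekindDieter (b - q * a) a (x - q * y) y = dedekindDieter b a x y := by
  have ha' : (a : ℝ) ≠ 0 := by exact_mod_cast ha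
  unfold dedekindDieter
  congr! 3 with k
  rw [← cFn_add_intCast _ (q * k)]
  congr 1
  push_cast
  field_simp
  ring

lemma dedekindDieter_mul_one (b : ℤ) (x : ℝ) : dedekindDieter b 1 (b * x) x = 0 := by
  have h0 : cFn 0 = 0 := by simpa using cFn_intCast 0
  simp [dedekindDieter, h0]

end Reciprocity

section AlternatingSums

variable {R : Type*} [CommRing R]

lemma sum_neg_one_pow_mul_add (f : ℕ → R) (n : ℕ) :
    ∑ j ∈ Finset.range n, (-1) ^ j * (f j + f (j + 1)) = f 0 - (-1) ^ n * f n := by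
  simpa [pow_succ, mul_add] using Finset.sum_range_sub' (fun j ↦ (-1) ^ j * f j) n

lemma eq_sum_neg_one_pow_mul_of_add_eq {D T f : ℕ → R} {c : R} {n : ℕ}
    (hD : ∀ j < n, D j + D (j + 1) = -1 - T (j + 1) + c * (f j + f (j + 1)))
    (hDn : D n = 0) (hf0 : f 0 = 0) :
    D 0 = ∑ j ∈ Finset.Icc 1 n, (-1) ^ j * T j + (-1) ^ (n - 1) * f n * c
      + if Odd n then -1 else 0 := by
  have sum_T : ∑ j ∈ Finset.Icc 1 n, (-1) ^ j * T j
      = ∑ j ∈ Finset.range n, (-1) ^ (j + 1) * T (j + 1) := by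
    rw [Finset.range_eq_Ico, Finset.sum_Ico_add' (fun j ↦ (-1) ^ j * T j), zero_add,
      Finset.Ico_add_one_right_eq_Icc]
  have last_sign : (-1) ^ (n - 1) * f n = -(-1) ^ n * f n := by
    rcases n with _ | n
    · simp [hf0]
    · simp [pow_succ]
  calc D 0 = ∑ j ∈ Finset.range n, (-1) ^ j * (D j + D (j + 1)) := by
        rw [sum_neg_one_pow_mul_add, hDn, mul_zero, sub_zero]
    _ = ∑ j ∈ Finset.range n, ((-1) ^ (j + 1) * T (j + 1)
          + c * ((-1) ^ j * (f j + f (j + 1))) - (-1) ^ j) :=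
        Finset.sum_congr rfl fun j hj ↦ by rw [hD j (Finset.mem_range.1 hj)]; ring
    _ = ∑ j ∈ Finset.Icc 1 n, (-1) ^ j * T j + c * (-(-1) ^ n * f n)
          - if Even n then 0 else 1 := by
        rw [Finset.sum_sub_distrib, Finset.sum_add_distrib, ← Finset.mul_sum,
          sum_neg_one_pow_mul_add, neg_one_geom_sum, sum_T, hf0, zero_sub, neg_mul]
    _ = _ := by
        rw [← last_sign]
        simp only [← Nat.not_even_iff_odd]
        split_ifs <;> ring

end AlternatingSums

section EuclideanAlgorithm

variable {R : Type*} [CommRing R] {α q s : ℕ → R} {n : ℕ}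

lemma isCoprime_of_euclidean_rec
    (hα : ∀ j, j + 1 < n → α (j + 2) = α j - q (j + 1) * α (j + 1)) (hn : α n = 1)
    {j : ℕ} (hj : j < n) : IsCoprime (α j) (α (j + 1)) := by
  obtain hlast | hlt : j + 1 = n ∨ j + 1 < n := by lia
  · rw [hlast, hn]
    exact isCoprime_one_right
  · have ih := isCoprime_of_euclidean_rec hα hn hlt
    rw [hα j hlt] at ih
    simpa using (ih.add_mul_right_right (q (j + 1))).symm
termination_by n - j

lemma continuant_mul_add
    (hα : ∀ j, j + 1 < n → α (j + 2) = α j - q (j + 1) * α (j + 1)) (hs0 : s 0 = 0) (hs1 : s 1 = 1)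
    (hs : ∀ j, j + 1 < n → s (j + 2) = s (j + 1) * q (j + 1) + s j) {j : ℕ} (hj : j < n) :
    s (j + 1) * α j + s j * α (j + 1) = α 0 := by
  induction j with
  | zero => rw [hs0, hs1]; ring
  | succ j ih =>
    rw [hα j hj, hs j hj]
    linear_combination ih (by lia)

lemma continuant_div_add_div {α q s : ℕ → ℤ} (hpos : ∀ j ≤ n, 0 < α j)
    (hα : ∀ j, j + 1 < n → α (j + 2) = α j - q (j + 1) * α (j + 1)) (hs0 : s 0 = 0) (hs1 : s 1 = 1)
    (hs : ∀ j, j + 1 < n → s (j + 2) = s (j + 1) * q (j + 1) + s j) {j : ℕ} (hj : j < n) :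
    (s j / (α 0 * α j) + s (j + 1) / (α 0 * α (j + 1)) : ℝ) = 1 / (α j * α (j + 1)) := by
  have ne_zero (i : ℕ) (hi : i ≤ n) : (α i : ℝ) ≠ 0 := by exact_mod_cast (hpos i hi).ne'
  have h0 := ne_zero 0 n.zero_le
  have hj0 := ne_zero j hj.le
  have hj1 := ne_zero (j + 1) hj
  have key : (s (j + 1) * α j + s j * α (j + 1) : ℝ) = α 0 := by
    exact_mod_cast continuant_mul_add hα hs0 hs1 hs hj
  field_simp
  linear_combination key

lemma dedekindDieter_add_dedekindDieter_of_euclidean_rec {α q : ℕ → ℤ} (hpos : ∀ j ≤ n, 0 < α j)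
    (hα : ∀ j, j + 1 < n → α (j + 2) = α j - q (j + 1) * α (j + 1)) (hn : α n = 1)
    {j : ℕ} (hj : j < n) (z : ℝ) :
    dedekindDieter (α (j + 1)) (α j) (α (j + 1) * z) (α j * z)
        + dedekindDieter (α (j + 2)) (α (j + 1)) (α (j + 2) * z) (α (j + 1) * z)
      = -1 - reciprocityTerm (α (j + 1)) (α j) (α (j + 1) * z) (α j * z)
        + c2Fn z / (α j * α (j + 1)) := by
  have hpos_succ := hpos (j + 1) hj
  have division_step : dedekindDieter (α (j + 2)) (α (j + 1)) (α (j + 2) * z) (α (j + 1) * z)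
      = dedekindDieter (α j) (α (j + 1)) (α j * z) (α (j + 1) * z) := by
    obtain hlast | hlt : j + 1 = n ∨ j + 1 < n := by lia
    · have h1 : α (j + 1) = 1 := by rw [hlast, hn]
      simp only [h1, Int.cast_one, one_mul, dedekindDieter_mul_one]
    · rw [← dedekindDieter_sub_mul_self hpos_succ.ne' (α j) (q (j + 1)), hα j hlt]
      push_cast
      ring_nf
  rw [division_step, dedekindDieter_add_dedekindDieter_of_isCoprime (hpos j hj.le) hpos_succ
    (isCoprime_of_euclidean_rec hα hn hj)]

end EuclideanAlgorithm

theorem stmt_2_general (z : ℝ) (n : ℕ) (α q s : ℕ → ℤ) (hpos : ∀ j ≤ n, 0 < α j)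
    (hα : ∀ j, 1 ≤ j → j ≤ n - 1 → α (j + 1) = α (j - 1) - q j * α j) (hn : α n = 1)
    (hs0 : s 0 = 0) (hs1 : s 1 = 1)
    (hs : ∀ j, 1 ≤ j → j ≤ n - 1 → s (j + 1) = s j * q j + s (j - 1)) :
    dedekindDieter (α 1) (α 0) (α 1 * z) (α 0 * z) =
      (∑ j ∈ Finset.Icc 1 n,
        (-1 : ℝ) ^ j * reciprocityTerm (α j) (α (j - 1)) (α j * z) (α (j - 1) * z))
      + (-1 : ℝ) ^ (n - 1) * (s n / α 0) * c2Fn z + (if Odd n then (-1 : ℝ) else 0) := by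
  replace hα : ∀ j, j + 1 < n → α (j + 2) = α j - q (j + 1) * α (j + 1) :=
    fun j hj ↦ hα (j + 1) (by lia) (by lia)
  replace hs : ∀ j, j + 1 < n → s (j + 2) = s (j + 1) * q (j + 1) + s j :=
    fun j hj ↦ hs (j + 1) (by lia) (by lia)
  have telescope := eq_sum_neg_one_pow_mul_of_add_eq
    (D := fun j ↦ dedekindDieter (α (j + 1)) (α j) (α (j + 1) * z) (α j * z))
    (T := fun j ↦ reciprocityTerm (α j) (α (j - 1)) (α j * z) (α (j - 1) * z))
    (f := fun j ↦ s j / (α 0 * α j)) (c := c2Fn z) (fun j hj ↦ by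
      rw [continuant_div_add_div hpos hα hs0 hs1 hs hj, mul_one_div]
      exact dedekindDieter_add_dedekindDieter_of_euclidean_rec hpos hα hn hj z)
    (by simp [hn, dedekindDieter_mul_one]) (by simp [hs0])
  simpa [hn] using telescope

/-- Reciprocity / Euclidean-algorithm evaluation of the Dedekind–Dieter sum
`c(b, a; b/r, a/r)` (special case of Dieter's reciprocity theorem). -/
theorem stmt_2 (r : ℤ) (hr : 2 ≤ r) (a b : ℤ) (hab : b < a) (hb : 0 < b)
    (hcop : Int.gcd a b = 1) (n : ℕ) (hn : 1 ≤ n)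
    (aSeq q s : ℕ → ℤ)
    (ha0 : aSeq 0 = a) (ha1 : aSeq 1 = b)
    (hapos : ∀ j ≤ n, 0 < aSeq j)
    (hqpos : ∀ j, 1 ≤ j → j ≤ n - 1 → 0 < q j)
    (harec : ∀ j, 1 ≤ j → j ≤ n - 1 → aSeq (j + 1) = aSeq (j - 1) - q j * aSeq j)
    (han : aSeq n = 1)
    (hs0 : s 0 = 0) (hs1 : s 1 = 1)
    (hsrec : ∀ j, 1 ≤ j → j ≤ n - 1 → s (j + 1) = s j * q j + s (j - 1)) :
    dedekindDieter b a ((b : ℝ) / (r : ℝ)) ((a : ℝ) / (r : ℝ)) =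
      (∑ j ∈ Finset.Icc 1 n, (-1 : ℝ) ^ j *
        (cFn ((aSeq (j - 1) : ℝ) / (r : ℝ)) * cFn ((aSeq j : ℝ) / (r : ℝ))
          - ((aSeq (j - 1) : ℝ) / (aSeq j : ℝ)) * (deltaFn ((aSeq j : ℝ)) r / (r : ℝ)) *
              c2Fn ((aSeq (j - 1) : ℝ) / (r : ℝ))
          - ((aSeq j : ℝ) / (aSeq (j - 1) : ℝ)) * (deltaFn ((aSeq (j - 1) : ℝ)) r / (r : ℝ)) *
              c2Fn ((aSeq j : ℝ) / (r : ℝ))))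
      + (-1 : ℝ) ^ (n - 1) * ((s n : ℝ) / (a : ℝ)) * c2Fn (1 / (r : ℝ))
      + (if Odd n then (-1 : ℝ) else 0) := by
  simpa only [reciprocityTerm, mul_one_div, deltaFn_div_one (by lia : r ≠ 0), ha0, ha1]
    using stmt_2_general (1 / r) n aSeq q s hapos harec han hs0 hs1 hsrec
end

section
/- Let p ≥ 5 be a prime. Then c(1, 2; 1/p, 2/p) = −cot(π/p)·cot(2π/p) + (1/2)·csc²(π/p) − 1 and c(2, 3; 2/p, 3/p) = cot(π/p)·cot(2π/p) − cot(2π/p)·cot(3π/p) − (1/3)·csc²(π/p). -/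
open Real
open scoped Classical

/-!
At the parameters `(x, y) = (b t, a t)` the shift disappears from the first factor, so that
`c(b,a;bt,at) = (1/a) ∑ₖ c(bk/a) c(t + k/a)`. For `(b,a) = (1,2)` this vanishes, because
`c(0) = c(1/2) = 0`. For `(b,a) = (2,3)` the product formula
`sin 3θ = 4 sin θ sin (θ + π/3) sin (θ + 2π/3)` gives `-(2/3) sin θ / sin 3θ` with `θ = πt`.
At `t = 1/p` the two closed forms reduce to the double and triple angle formulas.
-/

theorem cot_sub_cot {x y : ℝ} (hx : sin x ≠ 0) (hy : sin y ≠ 0) :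
    cot x - cot y = sin (y - x) / (sin x * sin y) := by
  rw [cot_eq_cos_div_sin, cot_eq_cos_div_sin, div_sub_div _ _ hx hy, sin_sub]
  ring

theorem sin_ne_zero_of_sin_two_mul_ne_zero {θ : ℝ} (h : sin (2 * θ) ≠ 0) : sin θ ≠ 0 := by
  contrapose! h
  rw [sin_two_mul, h, mul_zero, zero_mul]

theorem cot_mul_cot_two_mul {θ : ℝ} (h : sin (2 * θ) ≠ 0) :
    cot θ * cot (2 * θ) = 1 / 2 * (1 / sin θ ^ 2) - 1 := by
  have hsin : sin θ ≠ 0 := sin_ne_zero_of_sin_two_mul_ne_zero h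
  have hcos : cos θ ≠ 0 := by
    contrapose! h
    rw [sin_two_mul, h, mul_zero]
  rw [cot_eq_cos_div_sin, cot_eq_cos_div_sin, sin_two_mul, cos_two_mul, cos_sq']
  field_simp
  ring

theorem cot_two_mul_mul_cot_sub_cot_three_mul {θ : ℝ} (h2 : sin (2 * θ) ≠ 0)
    (h3 : sin (3 * θ) ≠ 0) :
    cot (2 * θ) * (cot θ - cot (3 * θ)) = cos (2 * θ) / (sin θ * sin (3 * θ)) := by
  rw [cot_sub_cot (sin_ne_zero_of_sin_two_mul_ne_zero h2) h3, cot_eq_cos_div_sin,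
    show 3 * θ - θ = 2 * θ by ring, div_mul_div_cancel₀ h2]

theorem cos_two_mul_div_sin_mul_sin_three_mul_sub {θ : ℝ} (h : sin (3 * θ) ≠ 0) :
    cos (2 * θ) / (sin θ * sin (3 * θ)) - 1 / 3 * (1 / sin θ ^ 2) =
      -(2 / 3) * (sin θ / sin (3 * θ)) := by
  have hsin : sin θ ≠ 0 := by
    contrapose! h
    simp [sin_three_mul, h]
  have hnum : 3 * (sin θ * cos (2 * θ)) - sin (3 * θ) = -2 * sin θ ^ 3 := by
    rw [sin_three_mul, cos_two_mul, cos_sq']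
    ring
  generalize sin (3 * θ) = s at h hnum ⊢
  field_simp
  linear_combination hnum

theorem sin_three_mul_eq_four_mul_sin_mul_sin_mul_sin (θ : ℝ) :
    sin (3 * θ) = 4 * sin θ * sin (θ + π / 3) * sin (θ + 2 * (π / 3)) := by
  have hsqrt : √3 ^ 2 = (3 : ℝ) := sq_sqrt (by norm_num)
  rw [show θ + 2 * (π / 3) = π - (π / 3 - θ) by ring, sin_pi_sub, sin_sub, sin_add, sin_three_mul,
    sin_pi_div_three, cos_pi_div_three]
  linear_combination -(sin θ * cos θ ^ 2) * hsqrt - 3 * sin θ * sin_sq_add_cos_sq θ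

theorem cot_add_two_mul_pi_div_three_sub_cot_add_pi_div_three {θ : ℝ} (h : sin (3 * θ) ≠ 0) :
    cot (θ + 2 * (π / 3)) - cot (θ + π / 3) = -(2 * √3) * (sin θ / sin (3 * θ)) := by
  rw [sin_three_mul_eq_four_mul_sin_mul_sin_mul_sin] at h ⊢
  obtain ⟨⟨⟨-, hθ⟩, h₁⟩, h₂⟩ : ((_ ∧ sin θ ≠ 0) ∧ sin (θ + π / 3) ≠ 0) ∧
      sin (θ + 2 * (π / 3)) ≠ 0 := by
    simpa only [mul_ne_zero_iff] using h
  rw [cot_sub_cot h₂ h₁, show θ + π / 3 - (θ + 2 * (π / 3)) = -(π / 3) by ring, sin_neg,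
    sin_pi_div_three]
  field_simp
  norm_num

theorem sin_mul_pi_div_pos {a p : ℝ} (ha : 0 < a) (hap : a < p) : 0 < sin (a * π / p) := by
  have hp : 0 < p := ha.trans hap
  refine sin_pos_of_pos_of_lt_pi (by positivity) ?_
  rw [div_lt_iff₀ hp, mul_comm π]
  gcongr

-- The case distinction in `cFn` is absorbed by `cot (m * π) = cos (m * π) / 0 = 0`.
theorem cFn_eq_cot (z : ℝ) : cFn z = cot (π * z) := by
  unfold cFn
  split_ifs with hz
  · obtain ⟨m, rfl⟩ := hz
    rw [cot_eq_cos_div_sin, mul_comm, sin_int_mul_pi, div_zero]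
  · rfl

theorem dedekindDieter_mul_mul (b a : ℤ) (t : ℝ) :
    dedekindDieter b a (b * t) (a * t) =
      1 / a * ∑ k ∈ Finset.range a.toNat, cot (k * (b * π / a)) * cot (π * t + k * (π / a)) := by
  unfold dedekindDieter
  congr 1
  refine Finset.sum_congr rfl fun k hk ↦ ?_
  have ha : (a : ℝ) ≠ 0 := by
    intro ha
    simp [Int.cast_eq_zero.mp ha] at hk
  rw [cFn_eq_cot, cFn_eq_cot]
  congr 2 <;> field_simp <;> ring

theorem dedekindDieter_one_two (t : ℝ) : dedekindDieter 1 2 t (2 * t) = 0 := by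
  simpa [Finset.sum_range_succ, cot_eq_cos_div_sin] using dedekindDieter_mul_mul 1 2 t

theorem dedekindDieter_two_three {t : ℝ} (h : sin (3 * (π * t)) ≠ 0) :
    dedekindDieter 2 3 (2 * t) (3 * t) = -(2 / 3) * (sin (π * t) / sin (3 * (π * t))) := by
  have hcot_zero : cot 0 = 0 := by simp [cot_eq_cos_div_sin]
  have hcot_two_thirds : cot (2 * π / 3) = -(1 / √3) := by
    rw [cot_eq_cos_div_sin, show 2 * π / 3 = π - π / 3 by ring, cos_pi_sub, sin_pi_sub,
      cos_pi_div_three, sin_pi_div_three]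
    field_simp
  have hcot_four_thirds : cot (2 * (2 * π / 3)) = 1 / √3 := by
    rw [cot_eq_cos_div_sin, show 2 * (2 * π / 3) = π / 3 + π by ring, cos_add_pi, sin_add_pi,
      cos_pi_div_three, sin_pi_div_three]
    field_simp
  calc dedekindDieter 2 3 (2 * t) (3 * t)
      = 1 / 3 * (cot 0 * cot (π * t) + cot (2 * π / 3) * cot (π * t + π / 3)
          + cot (2 * (2 * π / 3)) * cot (π * t + 2 * (π / 3))) := by
        simpa [Finset.sum_range_succ] using dedekindDieter_mul_mul 2 3 t
    _ = 1 / (3 * √3) * (cot (π * t + 2 * (π / 3)) - cot (π * t + π / 3)) := by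
        rw [hcot_zero, hcot_two_thirds, hcot_four_thirds]
        ring
    _ = -(2 / 3) * (sin (π * t) / sin (3 * (π * t))) := by
        rw [cot_add_two_mul_pi_div_three_sub_cot_add_pi_div_three h]
        field_simp

theorem stmt_3_general (p : ℝ) (h2 : sin (2 * π / p) ≠ 0) (h3 : sin (3 * π / p) ≠ 0) :
    dedekindDieter 1 2 (1 / p) (2 / p) =
      -cot (π / p) * cot (2 * π / p) + (1 / 2) * (1 / sin (π / p) ^ 2) - 1 ∧
    dedekindDieter 2 3 (2 / p) (3 / p) =
      cot (π / p) * cot (2 * π / p) - cot (2 * π / p) * cot (3 * π / p)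
        - (1 / 3) * (1 / sin (π / p) ^ 2) := by
  rw [mul_div_assoc] at h2 h3
  rw [mul_div_assoc, mul_div_assoc, ← mul_one_div 2 p, ← mul_one_div 3 p]
  constructor
  · rw [dedekindDieter_one_two, neg_mul, cot_mul_cot_two_mul h2]
    ring
  · rw [← mul_one_div π p] at h2 h3 ⊢
    rw [dedekindDieter_two_three h3, mul_comm (cot _), ← mul_sub,
      cot_two_mul_mul_cot_sub_cot_three_mul h2 h3,
      cos_two_mul_div_sin_mul_sin_three_mul_sub h3]

/-- Evaluation of the Dedekind–Dieter sums `c(1,2;1/p,2/p)` and `c(2,3;2/p,3/p)`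
for a prime `p ≥ 5`. -/
theorem stmt_3 (p : ℕ) (hp : p.Prime) (hp5 : 5 ≤ p) :
    dedekindDieter 1 2 (1 / (p : ℝ)) (2 / (p : ℝ)) =
      -Real.cot (π / p) * Real.cot (2 * π / p)
        + (1 / 2) * (1 / Real.sin (π / p) ^ 2) - 1 ∧
    dedekindDieter 2 3 (2 / (p : ℝ)) (3 / (p : ℝ)) =
      Real.cot (π / p) * Real.cot (2 * π / p)
        - Real.cot (2 * π / p) * Real.cot (3 * π / p)
        - (1 / 3) * (1 / Real.sin (π / p) ^ 2) := by
  have hp3 : (3 : ℝ) < p := by exact_mod_cast (show 3 < p by lia)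
  exact stmt_3_general p (sin_mul_pi_div_pos two_pos (by linarith)).ne'
    (sin_mul_pi_div_pos three_pos hp3).ne'
end

section
/- Let a > b > 0 be coprime integers. Let a₀, a₁, …, a_n be the positive integers defined inductively by a₀ = a, a₁ = b, and a_j = a_{j−2} − q_{j−1} a_{j−1} for some positive integers q₁, …, q_{n−1}, terminating at a_n = 1, and let s₀, …, s_{n−1} be defined by s₀ = 0, s₁ = 1, and s_j = q_{j−1}s_{j−1} + s_{j−2} for 2 ≤ j ≤ n−1. Then s(b, a) = (−1)^{n−1}·(a_{n−1}² + 2)/(12 a_{n−1}) + a₁/(12 a₀) + (−1)^n · a_{n−2}/(12 a_{n−1}) + (−1)^n · s_{n−1}/(12 a₀ a_{n−1}) + Σ_{j=1}^{n−2} (−1)^{j−1} q_j/12 + E, where E = 0 if n is even and E = −1/4 if n is odd. -/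
open Real
open scoped Classical

/-- The generalized sawtooth function `((x))`. -/
noncomputable def saw (x : ℝ) : ℝ :=
  if ∃ m : ℤ, x = m then 0 else Int.fract x - 1 / 2

/-- The Dedekind–Rademacher sum
`s(b,a;x,y) = ∑_{k=0}^{|a|−1} ((x + (b/a)(k+y))) (((k+y)/a))`. -/
noncomputable def dedekindRademacher (b a : ℤ) (x y : ℝ) : ℝ :=
  ∑ k ∈ Finset.range a.natAbs,
    saw (x + (b : ℝ) / (a : ℝ) * ((k : ℝ) + y)) * saw (((k : ℝ) + y) / (a : ℝ))

/-- The ordinary Dedekind sum `s(b, a) = s(b, a; 0, 0)`. -/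
noncomputable def dedekindSum (b a : ℤ) : ℝ := dedekindRademacher b a 0 0

/-! The Dedekind reciprocity law comes from evaluating `∑ (bk mod a)²` in two ways: multiplication
by `b` permutes the residues mod `a`, while `bk mod a = bk - a⌊bk/a⌋` turns the sum into floor sums,
and counting lattice points under the diagonal of an `a × b` rectangle by rows instead of columns
trades `∑ ⌊bk/a⌋²` for `∑ l⌊al/b⌋`.

Along a division chain `a_j = q_{j+1} a_{j+1} + a_{j+2}` with continuants `s_j`, put
`T_j = s(a_{j+1}, a_j) - (a_{j+1} + s_j / a₀) / (12 a_j)`. The identity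
`s_{j+1} a_j + s_j a_{j+1} = a₀` splits the term `1 / (a_j a_{j+1})` of the reciprocity law, which
then reads `T_j + T_{j+1} = (q_{j+1} - 3) / 12`, and the alternating sum of these relations
telescopes. -/

section FloorSums

open Finset

lemma two_mul_sum_range_natCast {R : Type*} [CommRing R] (a : ℕ) :
    2 * ∑ k ∈ range a, (k : R) = a * (a - 1) := by
  induction a with
  | zero => simp
  | succ a ih => rw [sum_range_succ, mul_add, ih]; push_cast; ring

lemma six_mul_sum_range_natCast_sq {R : Type*} [CommRing R] (a : ℕ) :
    6 * ∑ k ∈ range a, (k : R) ^ 2 = a * (a - 1) * (2 * a - 1) := by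
  induction a with
  | zero => simp
  | succ a ih => rw [sum_range_succ, mul_add, ih]; push_cast; ring

lemma sum_Icc_one_two_mul_sub_one {R : Type*} [CommRing R] (m : ℕ) :
    ∑ l ∈ Icc 1 m, (2 * (l : R) - 1) = (m : R) ^ 2 := by
  induction m with
  | zero => simp
  | succ m ih => rw [sum_Icc_succ_top (by omega), ih]; push_cast; ring

lemma sum_range_comp_mul_mod {M : Type*} [AddCommMonoid M] {a b : ℕ} (h : a.Coprime b)
    (f : ℕ → M) : ∑ k ∈ range a, f (b * k % a) = ∑ k ∈ range a, f k := by
  have maps : Set.MapsTo (fun k => b * k % a) (range a : Set ℕ) (range a) := fun k hk =>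
    mem_coe.2 <| mem_range.2 <| Nat.mod_lt _ <| Nat.zero_lt_of_lt <| mem_range.1 <| mem_coe.1 hk
  have inj : Set.InjOn (fun k => b * k % a) (range a : Set ℕ) := fun k hk l hl hkl =>
    Nat.ModEq.eq_of_lt_of_lt (Nat.ModEq.cancel_left_of_coprime h hkl)
      (mem_range.1 (mem_coe.1 hk)) (mem_range.1 (mem_coe.1 hl))
  exact sum_nbij _ maps inj (surjOn_of_injOn_of_card_le _ maps inj le_rfl) fun _ _ => rfl

lemma natCast_mod_eq_sub_mul_div {R : Type*} [CommRing R] (m a : ℕ) :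
    ((m % a : ℕ) : R) = m - a * (m / a : ℕ) := by
  rw [eq_sub_iff_add_eq, ← Nat.cast_mul, ← Nat.cast_add, Nat.mod_add_div]

lemma two_mul_sum_mul_div {a b : ℕ} (ha : 0 < a) (h : a.Coprime b) :
    2 * ∑ k ∈ range a, ((b * k / a : ℕ) : ℤ) = (a - 1) * (b - 1) := by
  have residues := sum_range_comp_mul_mod h (Nat.cast : ℕ → ℤ)
  simp only [natCast_mod_eq_sub_mul_div, sum_sub_distrib, ← mul_sum, Nat.cast_mul] at residues
  refine mul_left_cancel₀ (Nat.cast_ne_zero.2 ha.ne' : (a : ℤ) ≠ 0) ?_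
  linear_combination (b - 1) * two_mul_sum_range_natCast (R := ℤ) a - 2 * residues

lemma le_mul_div_iff_mul_div_lt {a b k l : ℕ} (h : a.Coprime b) (hl : 0 < l) (hlb : l < b)
    (ha : 0 < a) : l ≤ b * k / a ↔ a * l / b < k := by
  have off_diagonal : a * l ≠ k * b := fun heq =>
    Nat.not_dvd_of_pos_of_lt hl hlb (h.symm.dvd_of_dvd_mul_left ⟨k, heq.trans (mul_comm k b)⟩)
  rw [Nat.le_div_iff_mul_le ha, Nat.div_lt_iff_lt_mul (hl.trans hlb), mul_comm l, mul_comm b,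
    off_diagonal.le_iff_lt]

lemma sum_range_sum_Icc_mul_div {M : Type*} [AddCommMonoid M] {a b : ℕ} (h : a.Coprime b)
    (g : ℕ → M) :
    ∑ k ∈ range a, ∑ l ∈ Icc 1 (b * k / a), g l
      = ∑ l ∈ Ico 1 b, (a - (a * l / b + 1)) • g l := by
  have below_diagonal (k l : ℕ) :
      k ∈ range a ∧ l ∈ Icc 1 (b * k / a) ↔ k ∈ Ico (a * l / b + 1) a ∧ l ∈ Ico 1 b := by
    simp only [mem_range, mem_Icc, mem_Ico, Nat.succ_le_iff]
    constructor
    · rintro ⟨hka, hl, hlk⟩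
      have hlb : l < b := by
        by_contra! hbl
        nlinarith [Nat.mul_le_of_le_div _ _ _ hlk]
      exact ⟨⟨(le_mul_div_iff_mul_div_lt h hl hlb (by omega)).1 hlk, hka⟩, hl, hlb⟩
    · rintro ⟨⟨hlk, hka⟩, hl, hlb⟩
      exact ⟨hka, hl, (le_mul_div_iff_mul_div_lt h hl hlb (by omega)).2 hlk⟩
  simp only [sum_comm' below_diagonal, sum_const, Nat.card_Ico]

lemma two_mul_sum_mul_div_sq {a b : ℕ} (ha : 0 < a) (hb : 0 < b) (h : a.Coprime b) :
    2 * ∑ k ∈ range a, ((b * k / a : ℕ) : ℤ) ^ 2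
      = (a - 1) * (b - 1) * (2 * b - 1) - 4 * ∑ l ∈ range b, (l : ℤ) * (a * l / b : ℕ) := by
  have by_rows : ∑ k ∈ range a, ((b * k / a : ℕ) : ℤ) ^ 2
      = ∑ l ∈ Ico 1 b, ((a : ℤ) - ((a * l / b : ℕ) + 1)) * (2 * l - 1) := by
    simp only [← sum_Icc_one_two_mul_sub_one]
    rw [sum_range_sum_Icc_mul_div h]
    refine sum_congr rfl fun l hl => ?_
    have hla : a * l / b < a := by
      rw [Nat.div_lt_iff_lt_mul hb]
      exact Nat.mul_lt_mul_of_pos_left (mem_Ico.1 hl).2 ha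
    rw [nsmul_eq_mul, Nat.cast_sub hla]
    push_cast
    ring
  have with_zero_row : ∑ l ∈ Ico 1 b, ((a : ℤ) - ((a * l / b : ℕ) + 1)) * (2 * l - 1)
      = ∑ l ∈ range b, ((a : ℤ) - ((a * l / b : ℕ) + 1)) * (2 * l - 1) + (a - 1) := by
    rw [range_eq_Ico, sum_eq_sum_Ico_succ_bot hb, mul_zero, Nat.zero_div]
    push_cast
    ring
  have expand : ∑ l ∈ range b, ((a : ℤ) - ((a * l / b : ℕ) + 1)) * (2 * l - 1)
      = (a - 1) * (2 * ∑ l ∈ range b, (l : ℤ)) - b * (a - 1)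
        - 2 * ∑ l ∈ range b, (l : ℤ) * (a * l / b : ℕ) + ∑ l ∈ range b, ((a * l / b : ℕ) : ℤ) := by
    have hconst : (b : ℤ) * (a - 1) = ∑ _l ∈ range b, ((a : ℤ) - 1) := by
      rw [sum_const, card_range, nsmul_eq_mul]
    simp only [hconst, mul_sum, ← sum_sub_distrib, ← sum_add_distrib]
    exact sum_congr rfl fun l _ => by ring
  rw [by_rows, with_zero_row, expand]
  linear_combination 2 * ((a : ℤ) - 1) * two_mul_sum_range_natCast (R := ℤ) b
    + two_mul_sum_mul_div hb h.symm

lemma sum_natCast_mul_div_reciprocity {a b : ℕ} (ha : 0 < a) (hb : 0 < b) (h : a.Coprime b) :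
    12 * (b * ∑ k ∈ range a, (k : ℤ) * (b * k / a : ℕ)
        + a * ∑ l ∈ range b, (l : ℤ) * (a * l / b : ℕ))
      = (a - 1) * (b - 1) * (8 * a * b - a - b - 1) := by
  have residues : ∑ k ∈ range a, ((b * k : ℕ) - a * (b * k / a : ℕ) : ℤ) ^ 2
      = ∑ k ∈ range a, (k : ℤ) ^ 2 := by
    simpa only [natCast_mod_eq_sub_mul_div] using
      sum_range_comp_mul_mod h fun k => (k : ℤ) ^ 2
  have expand : ∑ k ∈ range a, ((b * k : ℕ) - a * (b * k / a : ℕ) : ℤ) ^ 2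
      = b ^ 2 * ∑ k ∈ range a, (k : ℤ) ^ 2
        - 2 * a * b * ∑ k ∈ range a, (k : ℤ) * (b * k / a : ℕ)
        + a ^ 2 * ∑ k ∈ range a, ((b * k / a : ℕ) : ℤ) ^ 2 := by
    simp only [mul_sum, ← sum_sub_distrib, ← sum_add_distrib]
    exact sum_congr rfl fun k _ => by push_cast; ring
  refine mul_left_cancel₀ (Nat.cast_ne_zero.2 ha.ne' : (a : ℤ) ≠ 0) ?_
  linear_combination 6 * expand - 6 * residues + 3 * (a : ℤ) ^ 2 * two_mul_sum_mul_div_sq ha hb h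
    + ((b : ℤ) ^ 2 - 1) * six_mul_sum_range_natCast_sq (R := ℤ) a

end FloorSums

section DedekindSums

open Finset

lemma saw_add_intCast (x : ℝ) (m : ℤ) : saw (x + m) = saw x := by
  have h : (∃ k : ℤ, x + m = k) ↔ ∃ k : ℤ, x = k :=
    ⟨fun ⟨k, hk⟩ => ⟨k - m, by push_cast; linarith⟩, fun ⟨k, hk⟩ => ⟨k + m, by push_cast; linarith⟩⟩
  simp only [saw, h, Int.fract_add_intCast]

lemma saw_zero : saw 0 = 0 :=
  if_pos ⟨0, Int.cast_zero.symm⟩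

lemma saw_natCast_div_of_not_dvd {m a : ℕ} (ha : 0 < a) (h : ¬ a ∣ m) :
    saw (m / a) = (m % a : ℕ) / a - 1 / 2 := by
  have not_int : ¬ ∃ k : ℤ, (m / a : ℝ) = k := by
    rintro ⟨k, hk⟩
    rw [div_eq_iff (by positivity)] at hk
    exact h (Int.natCast_dvd_natCast.1 ⟨k, by rw [mul_comm]; exact_mod_cast hk⟩)
  rw [saw, if_neg not_int, Int.fract_div_natCast_eq_div_natCast_mod]

lemma dedekindSum_add_mul_right {a : ℤ} (ha : a ≠ 0) (b c : ℤ) :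
    dedekindSum (b + c * a) a = dedekindSum b a := by
  have ha' : (a : ℝ) ≠ 0 := Int.cast_ne_zero.2 ha
  unfold dedekindSum dedekindRademacher
  refine sum_congr rfl fun k _ => ?_
  rw [← saw_add_intCast (0 + (b : ℝ) / a * (k + 0)) (c * k)]
  congr 2
  push_cast
  field_simp
  ring

lemma dedekindSum_one_right (b : ℤ) : dedekindSum b 1 = 0 := by
  simp [dedekindSum, dedekindRademacher, saw_zero]

/-- The correction `1 / 4` is the `k = 0` summand, for which `saw 0 = 0` and not `-1 / 2`. -/
lemma dedekindSum_natCast_eq_sum_mod {a b : ℕ} (ha : 0 < a) (h : a.Coprime b) :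
    dedekindSum b a
      = ∑ k ∈ range a, (((b * k % a : ℕ) : ℝ) / a - 1 / 2) * (k / a - 1 / 2) - 1 / 4 := by
  have summand : ∀ k ∈ range a,
      saw (0 + ((b : ℤ) : ℝ) / ((a : ℤ) : ℝ) * (k + 0)) * saw ((k + 0) / ((a : ℤ) : ℝ))
        = (((b * k % a : ℕ) : ℝ) / a - 1 / 2) * (k / a - 1 / 2) - if k = 0 then 1 / 4 else 0 := by
    intro k hk
    rcases Nat.eq_zero_or_pos k with rfl | hk0
    · norm_num [saw_zero]
    · have hka : k < a := mem_range.1 hk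
      have hdvd : ¬ a ∣ k := Nat.not_dvd_of_pos_of_lt hk0 hka
      have saw_left := saw_natCast_div_of_not_dvd ha (mt h.dvd_of_dvd_mul_left hdvd)
      have saw_right := saw_natCast_div_of_not_dvd ha hdvd
      rw [Nat.mod_eq_of_lt hka] at saw_right
      rw [if_neg hk0.ne', sub_zero, ← saw_left, ← saw_right]
      push_cast
      ring_nf
  rw [dedekindSum, dedekindRademacher, Int.natAbs_natCast, sum_congr rfl summand,
    sum_sub_distrib, sum_ite_eq', if_pos (mem_range.2 ha)]

lemma dedekindSum_natCast_eq_sum_mul_div {a b : ℕ} (ha : 0 < a) (h : a.Coprime b) :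
    12 * a * dedekindSum b a = (a - 1) * (2 * b * (2 * a - 1) - 3 * a)
      - 12 * ∑ k ∈ range a, (k : ℝ) * (b * k / a : ℕ) := by
  have ha' : (a : ℝ) ≠ 0 := by positivity
  have expand : (a : ℝ) ^ 2 *
        ∑ k ∈ range a, (((b * k % a : ℕ) : ℝ) / a - 1 / 2) * (k / a - 1 / 2)
      = b * ∑ k ∈ range a, (k : ℝ) ^ 2 - a * ∑ k ∈ range a, (k : ℝ) * (b * k / a : ℕ)
        - a / 2 * ∑ k ∈ range a, ((b * k % a : ℕ) : ℝ) - a / 2 * ∑ k ∈ range a, (k : ℝ)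
        + a * (a ^ 2 / 4) := by
    have hconst : (a : ℝ) * (a ^ 2 / 4) = ∑ _k ∈ range a, (a : ℝ) ^ 2 / 4 := by simp
    simp only [hconst, mul_sum, ← sum_sub_distrib, ← sum_add_distrib]
    refine sum_congr rfl fun k _ => ?_
    rw [natCast_mod_eq_sub_mul_div]
    field_simp
    push_cast
    ring
  rw [sum_range_comp_mul_mod h (Nat.cast : ℕ → ℝ)] at expand
  rw [dedekindSum_natCast_eq_sum_mod ha h]
  refine mul_left_cancel₀ ha' ?_
  linear_combination 12 * expand + 2 * b * six_mul_sum_range_natCast_sq (R := ℝ) a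
    - 6 * a * two_mul_sum_range_natCast (R := ℝ) a

theorem dedekindSum_reciprocity {a b : ℤ} (ha : 0 < a) (hb : 0 < b) (h : IsCoprime a b) :
    dedekindSum b a + dedekindSum a b
      = -1 / 4 + ((a : ℝ) / b + b / a + 1 / (a * b)) / 12 := by
  lift a to ℕ using ha.le
  lift b to ℕ using hb.le
  rw [Nat.isCoprime_iff_coprime] at h
  rw [Int.natCast_pos] at ha hb
  have floor_sums : (12 : ℝ) * (b * ∑ k ∈ range a, (k : ℝ) * (b * k / a : ℕ)
        + a * ∑ l ∈ range b, (l : ℝ) * (a * l / b : ℕ))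
      = (a - 1) * (b - 1) * (8 * a * b - a - b - 1) := by
    have := congrArg (Int.cast : ℤ → ℝ) (sum_natCast_mul_div_reciprocity ha hb h)
    simpa only [Int.cast_mul, Int.cast_add, Int.cast_sub, Int.cast_sum, Int.cast_natCast,
      Int.cast_one, Int.cast_ofNat] using this
  have cleared : (12 * a * b : ℝ) * (dedekindSum b a + dedekindSum a b)
      = -3 * a * b + a ^ 2 + b ^ 2 + 1 := by
    linear_combination (b : ℝ) * dedekindSum_natCast_eq_sum_mul_div ha h
      + (a : ℝ) * dedekindSum_natCast_eq_sum_mul_div hb h.symm - floor_sums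
  push_cast
  field_simp
  linear_combination 4 * cleared

lemma dedekindSum_one_left {a : ℤ} (ha : 0 < a) :
    dedekindSum 1 a = ((a : ℝ) ^ 2 + 2) / (12 * a) - 1 / 4 := by
  have ha' : (a : ℝ) ≠ 0 := Int.cast_ne_zero.2 ha.ne'
  have reciprocity := dedekindSum_reciprocity ha one_pos isCoprime_one_right
  rw [dedekindSum_one_right, add_zero] at reciprocity
  rw [reciprocity]
  push_cast
  field_simp
  ring

end DedekindSums

section DivisionChains

open Finset

lemma eq_alternating_sum_of_add_succ {R : Type*} [CommRing R] {f g : ℕ → R} {m : ℕ}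
    (h : ∀ j < m, f j + f (j + 1) = g j) :
    f 0 = ∑ j ∈ range m, (-1) ^ j * g j + (-1) ^ m * f m := by
  have telescope := sum_range_sub' (fun j => (-1) ^ j * f j) m
  rw [pow_zero, one_mul, eq_sub_iff_add_eq] at telescope
  rw [← telescope]
  congr 1
  refine sum_congr rfl fun j hj => ?_
  rw [← h j (mem_range.1 hj)]
  ring

/-- The continuants `s_j` of the partial quotients `q₁, q₂, …`. -/
def continuant (q : ℕ → ℤ) : ℕ → ℤ
  | 0 => 0
  | 1 => 1
  | j + 2 => q (j + 1) * continuant q (j + 1) + continuant q j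

lemma eq_continuant {q s : ℕ → ℤ} {n : ℕ} (hs0 : s 0 = 0) (hs1 : s 1 = 1)
    (hs : ∀ j, j + 2 ≤ n → s (j + 2) = q (j + 1) * s (j + 1) + s j) :
    ∀ j ≤ n, s j = continuant q j
  | 0, _ => hs0
  | 1, _ => hs1
  | j + 2, hj => by
    rw [hs j hj, eq_continuant hs0 hs1 hs (j + 1) (by omega), eq_continuant hs0 hs1 hs j (by omega),
      continuant]

/-- A chain `a₀, …, a_n` of positive integers in which each term is a quotient times the next one
plus the one after. The quotients `q₁, …, q_{n-1}` are arbitrary integers, so the "remainders" need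
not decrease. -/
structure IsDivisionChain (a q : ℕ → ℤ) (n : ℕ) : Prop where
  pos : ∀ j ≤ n, 0 < a j
  eq_quot_mul_add : ∀ j, j + 2 ≤ n → a j = q (j + 1) * a (j + 1) + a (j + 2)

/-- The Dedekind sum `s(a_{j+1}, a_j)` minus those terms of its reciprocity law that telescope along
the chain `a`. -/
noncomputable def reducedDedekindSum (a q : ℕ → ℤ) (j : ℕ) : ℝ :=
  dedekindSum (a (j + 1)) (a j) - (a (j + 1) + continuant q j / a 0) / (12 * a j)

namespace IsDivisionChain

variable {a q : ℕ → ℤ}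

section ArbitraryIndex

variable {n : ℕ} (h : IsDivisionChain a q n)
include h

lemma cast_ne_zero {j : ℕ} (hj : j ≤ n) : (a j : ℝ) ≠ 0 :=
  Int.cast_ne_zero.2 (h.pos j hj).ne'

lemma gcd_eq {j : ℕ} (hj : j + 1 ≤ n) : (a j).gcd (a (j + 1)) = (a 0).gcd (a 1) := by
  induction j with
  | zero => rfl
  | succ j ih =>
    rw [← ih (by omega), h.eq_quot_mul_add j hj, Int.gcd_mul_right_add_left, Int.gcd_comm]

lemma isCoprime (hcop : IsCoprime (a 0) (a 1)) {j : ℕ} (hj : j + 1 ≤ n) :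
    IsCoprime (a j) (a (j + 1)) := by
  rwa [Int.isCoprime_iff_gcd_eq_one, h.gcd_eq hj, ← Int.isCoprime_iff_gcd_eq_one]

lemma continuant_identity {j : ℕ} (hj : j + 1 ≤ n) :
    continuant q (j + 1) * a j + continuant q j * a (j + 1) = a 0 := by
  induction j with
  | zero => simp [continuant]
  | succ j ih =>
    rw [continuant, ← ih (by omega), h.eq_quot_mul_add j hj]
    ring

lemma dedekindSum_add_succ (hcop : IsCoprime (a 0) (a 1)) {j : ℕ} (hj : j + 2 ≤ n) :
    dedekindSum (a (j + 1)) (a j) + dedekindSum (a (j + 2)) (a (j + 1))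
      = -1 / 4 + ((a j : ℝ) / a (j + 1) + a (j + 1) / a j + 1 / (a j * a (j + 1))) / 12 := by
  have hpos := h.pos (j + 1) (by omega)
  rw [← dedekindSum_reciprocity (h.pos j (by omega)) hpos (h.isCoprime hcop (by omega)),
    h.eq_quot_mul_add j hj, add_comm _ (a (j + 2)), dedekindSum_add_mul_right hpos.ne']

lemma reducedDedekindSum_add_succ (hcop : IsCoprime (a 0) (a 1)) {j : ℕ} (hj : j + 2 ≤ n) :
    reducedDedekindSum a q j + reducedDedekindSum a q (j + 1) = (q (j + 1) - 3) / 12 := by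
  have h0 := h.cast_ne_zero (Nat.zero_le n)
  have h1 := h.cast_ne_zero (j := j) (by omega)
  have h2 := h.cast_ne_zero (j := j + 1) (by omega)
  have division : (a j : ℝ) / a (j + 1) = q (j + 1) + a (j + 2) / a (j + 1) := by
    rw [div_eq_iff h2, add_mul, div_mul_cancel₀ _ h2]
    exact_mod_cast h.eq_quot_mul_add j hj
  have splitting : 1 / ((a j : ℝ) * a (j + 1))
      = continuant q (j + 1) / a 0 / a (j + 1) + continuant q j / a 0 / a j := by
    have identity : (continuant q (j + 1) * a j + continuant q j * a (j + 1) : ℝ) = a 0 := by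
      exact_mod_cast h.continuant_identity (j := j) (by omega)
    field_simp
    linear_combination -identity
  have reciprocity := h.dedekindSum_add_succ hcop hj
  rw [division, splitting] at reciprocity
  rw [reducedDedekindSum, reducedDedekindSum]
  linear_combination reciprocity

theorem dedekindSum_eq_sum_quotients (hcop : IsCoprime (a 0) (a 1)) {m : ℕ} (hm : m + 1 ≤ n) :
    dedekindSum (a 1) (a 0) = a 1 / (12 * a 0)
      + ∑ j ∈ range m, (-1) ^ j * ((q (j + 1) - 3) / 12 : ℝ)
      + (-1) ^ m * reducedDedekindSum a q m := by
  have telescope := eq_alternating_sum_of_add_succ (f := reducedDedekindSum a q) (m := m)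
    fun j hj => h.reducedDedekindSum_add_succ hcop (by omega)
  rw [add_assoc, ← telescope, reducedDedekindSum, continuant]
  push_cast
  ring

end ArbitraryIndex

lemma isCoprime_of_last_eq_one {m : ℕ} (h : IsDivisionChain a q (m + 1)) (hlast : a (m + 1) = 1) :
    IsCoprime (a 0) (a 1) := by
  rw [Int.isCoprime_iff_gcd_eq_one, ← h.gcd_eq le_rfl, hlast, Int.gcd_one_right]

lemma reducedDedekindSum_of_last_eq_one {m : ℕ} (h : IsDivisionChain a q (m + 1))
    (hlast : a (m + 1) = 1) :
    reducedDedekindSum a q m = ((a m : ℝ) ^ 2 + 2) / (12 * a m) - 1 / 4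
      - (1 + continuant q m / a 0) / (12 * a m) := by
  rw [reducedDedekindSum, hlast, dedekindSum_one_left (h.pos m (by omega)), Int.cast_one]

theorem dedekindSum_eq_of_last_eq_one {m : ℕ} (h : IsDivisionChain a q (m + 2))
    (hlast : a (m + 2) = 1) :
    dedekindSum (a 1) (a 0) =
      (-1) ^ (m + 1) * ((a (m + 1) : ℝ) ^ 2 + 2) / (12 * a (m + 1)) + a 1 / (12 * a 0)
      + (-1) ^ m * a m / (12 * a (m + 1))
      + (-1) ^ m * continuant q (m + 1) / (12 * a 0 * a (m + 1))
      + ∑ j ∈ range m, (-1) ^ j * (q (j + 1) : ℝ) / 12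
      - (∑ j ∈ range (m + 2), (-1) ^ j) / 4 := by
  have h0 := h.cast_ne_zero (Nat.zero_le _)
  have h1 := h.cast_ne_zero (j := m + 1) (by omega)
  have last_quotient : (q (m + 1) : ℝ) = (a m - 1) / a (m + 1) := by
    have division : (a m : ℝ) = q (m + 1) * a (m + 1) + 1 := by
      exact_mod_cast hlast ▸ h.eq_quot_mul_add m le_rfl
    rw [eq_div_iff h1, division, add_sub_cancel_right]
  have quotients : ∑ j ∈ range (m + 1), (-1) ^ j * ((q (j + 1) - 3) / 12 : ℝ)
      = ∑ j ∈ range (m + 1), (-1) ^ j * (q (j + 1) : ℝ) / 12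
        - (∑ j ∈ range (m + 1), (-1) ^ j) / 4 := by
    rw [sum_div, ← sum_sub_distrib]
    exact sum_congr rfl fun j _ => by ring
  rw [h.dedekindSum_eq_sum_quotients (h.isCoprime_of_last_eq_one hlast) le_rfl,
    h.reducedDedekindSum_of_last_eq_one hlast, quotients, sum_range_succ _ m, last_quotient,
    sum_range_succ _ (m + 1)]
  field_simp
  ring

end IsDivisionChain

end DivisionChains

theorem stmt_8_general (n : ℕ) (hn : 2 ≤ n) (aSeq q s : ℕ → ℤ)
    (hapos : ∀ j ≤ n, 0 < aSeq j)
    (harec : ∀ j, 2 ≤ j → j ≤ n → aSeq j = aSeq (j - 2) - q (j - 1) * aSeq (j - 1))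
    (han : aSeq n = 1)
    (hs0 : s 0 = 0) (hs1 : s 1 = 1)
    (hsrec : ∀ j, 2 ≤ j → j ≤ n - 1 → s j = q (j - 1) * s (j - 1) + s (j - 2)) :
    dedekindSum (aSeq 1) (aSeq 0) =
      (-1 : ℝ) ^ (n - 1) * ((aSeq (n - 1) : ℝ) ^ 2 + 2) / (12 * (aSeq (n - 1) : ℝ))
      + (aSeq 1 : ℝ) / (12 * (aSeq 0 : ℝ))
      + (-1 : ℝ) ^ n * (aSeq (n - 2) : ℝ) / (12 * (aSeq (n - 1) : ℝ))
      + (-1 : ℝ) ^ n * (s (n - 1) : ℝ) / (12 * (aSeq 0 : ℝ) * (aSeq (n - 1) : ℝ))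
      + (∑ j ∈ Finset.Icc 1 (n - 2), (-1 : ℝ) ^ (j - 1) * (q j : ℝ) / 12)
      + (if Odd n then (-1 / 4 : ℝ) else 0) := by
  have chain : IsDivisionChain aSeq q n := ⟨hapos, fun j hj => by
    rw [harec (j + 2) (by omega) hj, Nat.add_sub_cancel, Nat.add_succ_sub_one]; ring⟩
  have s_eq : s (n - 1) = continuant q (n - 1) := eq_continuant hs0 hs1
    (fun j hj => by simpa using hsrec (j + 2) (by omega) hj) (n - 1) le_rfl
  obtain ⟨m, rfl⟩ := Nat.exists_eq_add_of_le' hn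
  have parity : (if Odd (m + 2) then (-1 / 4 : ℝ) else 0)
      = -(∑ j ∈ Finset.range (m + 2), (-1 : ℝ) ^ j) / 4 := by
    rw [neg_one_geom_sum]
    split_ifs <;> simp_all [← Nat.not_even_iff_odd]
  have quotient_sum : ∑ j ∈ Finset.Icc 1 m, (-1 : ℝ) ^ (j - 1) * (q j : ℝ) / 12
      = ∑ j ∈ Finset.range m, (-1 : ℝ) ^ j * (q (j + 1) : ℝ) / 12 := by
    rw [← Finset.Ico_add_one_right_eq_Icc, Finset.sum_Ico_eq_sum_range, Nat.add_sub_cancel]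
    simp only [add_comm 1, Nat.add_sub_cancel]
  rw [chain.dedekindSum_eq_of_last_eq_one han, s_eq, parity]
  simp only [Nat.add_sub_cancel, Nat.add_succ_sub_one, quotient_sum]
  ring

/-- Euclidean-algorithm evaluation of the ordinary Dedekind sum `s(b, a)`. -/
theorem stmt_8 (a b : ℤ) (hab : b < a) (hb : 0 < b) (hcop : Int.gcd a b = 1)
    (n : ℕ) (hn : 2 ≤ n)
    (aSeq q s : ℕ → ℤ)
    (ha0 : aSeq 0 = a) (ha1 : aSeq 1 = b)
    (hapos : ∀ j ≤ n, 0 < aSeq j)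
    (hqpos : ∀ j, 1 ≤ j → j ≤ n - 1 → 0 < q j)
    (harec : ∀ j, 2 ≤ j → j ≤ n → aSeq j = aSeq (j - 2) - q (j - 1) * aSeq (j - 1))
    (han : aSeq n = 1)
    (hs0 : s 0 = 0) (hs1 : s 1 = 1)
    (hsrec : ∀ j, 2 ≤ j → j ≤ n - 1 → s j = q (j - 1) * s (j - 1) + s (j - 2)) :
    dedekindSum b a =
      (-1 : ℝ) ^ (n - 1) * ((aSeq (n - 1) : ℝ) ^ 2 + 2) / (12 * (aSeq (n - 1) : ℝ))
      + (aSeq 1 : ℝ) / (12 * (aSeq 0 : ℝ))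
      + (-1 : ℝ) ^ n * (aSeq (n - 2) : ℝ) / (12 * (aSeq (n - 1) : ℝ))
      + (-1 : ℝ) ^ n * (s (n - 1) : ℝ) / (12 * (aSeq 0 : ℝ) * (aSeq (n - 1) : ℝ))
      + (∑ j ∈ Finset.Icc 1 (n - 2), (-1 : ℝ) ^ (j - 1) * (q j : ℝ) / 12)
      + (if Odd n then (-1 / 4 : ℝ) else 0) := by
  subst ha0 ha1
  exact stmt_8_general n hn aSeq q s hapos harec han hs0 hs1 hsrec
end

section
/- Let p ≥ 5 be a prime. Then the Dedekind sum s(p, 6p+1) equals (−p² + 6p)/(12p + 2). -/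
open Real
open scoped Classical

/-!
Put `a = m * b + 1`, with `b = p` and `m = 6` in the end, and write each `0 < k < a` uniquely as
`k = m * j + r` with `j < b` and `1 ≤ r ≤ m`. Then `b * k = j * a + (b * r - j)` with
`0 < b * r - j < a`, so both fractional parts in the Dedekind sum `s(b, a)` are explicit, and the
sum is that of a polynomial over a `b × m` grid.
-/

lemma saw_intCast (n : ℤ) : saw n = 0 :=
  if_pos ⟨n, rfl⟩

lemma saw_of_fract_ne_zero {x : ℝ} (hx : Int.fract x ≠ 0) : saw x = Int.fract x - 1 / 2 := by
  refine if_neg ?_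
  rintro ⟨n, rfl⟩
  exact hx (Int.fract_intCast n)

lemma saw_intCast_div_of_eq_mul_add {n q r a : ℤ} (hn : n = q * a + r) (hr : 0 < r)
    (hra : r < a) : saw ((n : ℝ) / a) = (r : ℝ) / a - 1 / 2 := by
  have hr' : (0 : ℝ) < r := by exact_mod_cast hr
  have hra' : (r : ℝ) < a := by exact_mod_cast hra
  have ha : (0 : ℝ) < a := hr'.trans hra'
  have hfract : Int.fract ((n : ℝ) / a) = r / a := by
    refine Int.fract_eq_iff.2 ⟨(div_pos hr' ha).le, (div_lt_one ha).2 hra', q, ?_⟩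
    rw [hn]
    push_cast
    field_simp
    ring
  rw [saw_of_fract_ne_zero (hfract ▸ (div_pos hr' ha).ne'), hfract]

lemma dedekindSum_natCast_add_one (b : ℤ) (n : ℕ) :
    dedekindSum b (n + 1) =
      ∑ k ∈ Finset.range n,
        saw ((b : ℝ) * (k + 1) / (n + 1)) * saw (((k : ℝ) + 1) / (n + 1)) := by
  have saw_zero : saw 0 = 0 := by exact_mod_cast saw_intCast 0
  have natAbs_eq : ((n : ℤ) + 1).natAbs = n + 1 := Int.natAbs_natCast (n + 1)
  simp [dedekindSum, dedekindRademacher, natAbs_eq, Finset.sum_range_succ', saw_zero,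
    div_mul_eq_mul_div]

lemma sum_range_mul_eq_sum_sum {M : Type*} [AddCommMonoid M] (f : ℕ → M) (m b : ℕ) :
    ∑ k ∈ Finset.range (m * b), f k =
      ∑ j ∈ Finset.range b, ∑ r ∈ Finset.range m, f (m * j + r) := by
  induction b with
  | zero => simp
  | succ b ih => rw [Nat.mul_succ, Finset.sum_range_add, ih, Finset.sum_range_succ]

lemma saw_mul_saw_eq_residues {m b j r : ℕ} (hj : j < b) (hr : r < m) :
    saw ((b : ℝ) * (m * j + r + 1) / (m * b + 1)) * saw (((m : ℝ) * j + r + 1) / (m * b + 1)) =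
      ((b * (r + 1) - j) / (m * b + 1) - 1 / 2) * ((m * j + r + 1) / (m * b + 1) - 1 / 2) := by
  have hrow : (m * (j + 1) : ℤ) ≤ m * b := by exact_mod_cast Nat.mul_le_mul_left m hj
  have hcol : (b * (r + 1) : ℤ) ≤ b * m := by exact_mod_cast Nat.mul_le_mul_left b hr
  have hbr : (0 : ℤ) ≤ b * r := by positivity
  have hmj : (0 : ℤ) ≤ m * j := by positivity
  have hleft := saw_intCast_div_of_eq_mul_add (n := b * (m * j + r + 1)) (q := j)
    (r := b * (r + 1) - j) (a := m * b + 1) (by ring) (by linarith) (by linarith)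
  have hright := saw_intCast_div_of_eq_mul_add (n := m * j + r + 1) (q := 0)
    (r := m * j + r + 1) (a := m * b + 1) (by ring) (by linarith) (by linarith)
  push_cast at hleft hright
  rw [hleft, hright]

lemma sum_range_quadratic {K : Type*} [Field K] [CharZero K] (α β γ : K) (n : ℕ) :
    ∑ i ∈ Finset.range n, (α + β * i + γ * (i : K) ^ 2) =
      α * n + β * (n * (n - 1) / 2) + γ * (n * (n - 1) * (2 * n - 1) / 6) := by
  induction n with
  | zero => simp
  | succ n ih =>
    rw [Finset.sum_range_succ, ih]
    push_cast
    ring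

lemma sum_row_residues {K : Type*} [Field K] [CharZero K] (m : ℕ) (a b j : K) :
    ∑ r ∈ Finset.range m, ((b * (r + 1) - j) / a - 1 / 2) * ((m * j + r + 1) / a - 1 / 2) =
      (b * (m * (m + 1) * (2 * m + 1) / 6) / a ^ 2 - (b + 1) * (m * (m + 1) / 2) / (2 * a)
          + m * (1 / 2) ^ 2)
        + ((b * m - 1) * (m * (m + 1) / 2) / a ^ 2 - m * (m - 1) / (2 * a)) * j
        + -(m ^ 2 / a ^ 2) * j ^ 2 := by
  calc
    _ = ∑ r ∈ Finset.range m,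
        (((b - j) / a - 1 / 2) * ((m * j + 1) / a - 1 / 2)
          + (((b - j) / a - 1 / 2) / a + b / a * ((m * j + 1) / a - 1 / 2)) * r
          + b / a ^ 2 * (r : K) ^ 2) := Finset.sum_congr rfl fun r _ ↦ by ring
    _ = _ := by
      rw [sum_range_quadratic]
      ring

lemma sum_grid_residues (m b : ℕ) :
    ∑ j ∈ Finset.range b, ∑ r ∈ Finset.range m,
        (((b : ℝ) * (r + 1) - j) / (m * b + 1) - 1 / 2) * ((m * j + r + 1) / (m * b + 1) - 1 / 2) =
      m * b * (m - b) / (12 * (m * b + 1)) := by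
  simp only [sum_row_residues, sum_range_quadratic]
  field_simp
  ring

theorem stmt_10_general (m b : ℕ) :
    dedekindSum b (m * b + 1) = m * b * (m - b) / (12 * (m * b + 1)) := by
  have hsum := dedekindSum_natCast_add_one b (m * b)
  push_cast at hsum
  rw [hsum, sum_range_mul_eq_sum_sum]
  push_cast
  rw [Finset.sum_congr rfl fun j hj ↦ Finset.sum_congr rfl fun r hr ↦
    saw_mul_saw_eq_residues (Finset.mem_range.1 hj) (Finset.mem_range.1 hr)]
  exact sum_grid_residues m b

/-- For a prime `p ≥ 5`, `s(p, 6p+1) = (−p² + 6p)/(12p + 2)`. -/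
theorem stmt_10 (p : ℕ) (hp : p.Prime) (hp5 : 5 ≤ p) :
    dedekindSum (p : ℤ) (6 * (p : ℤ) + 1) =
      (-(p : ℝ) ^ 2 + 6 * (p : ℝ)) / (12 * (p : ℝ) + 2) := by
  refine (stmt_10_general 6 p).trans ?_
  push_cast
  field_simp
  ring
end
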